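/- For every i ∈ {1,…,n} and every integer k with 0 ≤ k ≤ n, the probability that node V_i has degree k under the Pólya joint law is P(deg_i = k) = C(n−i, k)·g(k)·1{k ≤ n−i} + C(n−i, k−i)·g(k−i+1)·1{k ≥ i}, where g(x) = Γ(1/δ)·Γ(ρ/δ + x)·Γ((1−ρ)/δ + n − i + 1 − x) / (Γ(ρ/δ)·Γ((1−ρ)/δ)·Γ(1/δ + n − i + 1)). -/

import Mathlib

open Finset

/-- The Pólya joint law on binary `n`-tuples. -/
noncomputable def polyaP (n : ℕ) (R B Δ : ℝ) (z : Fin n → Fin 2) : ℝ :=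
  (∏ i ∈ Finset.range (∑ t, (z t : ℕ)), (R + i * Δ)) *
    (∏ j ∈ Finset.range (n - ∑ t, (z t : ℕ)), (B + j * Δ)) /
    ∏ m ∈ Finset.range n, (R + B + m * Δ)

/-- The degree of node `V_i` (here `i : Fin n` represents the paper's node `i+1`). -/
def degNode (n : ℕ) (i : Fin n) (z : Fin n → Fin 2) : ℕ :=
  ((i : ℕ) + 1) * (z i : ℕ) + ∑ j ∈ Finset.univ.filter (fun j => i < j), (z j : ℕ)

/-- `g_i^{(n-i+1)}(x) = Γ(1/δ)Γ(ρ/δ+x)Γ((1−ρ)/δ+n−i+1−x) / (Γ(ρ/δ)Γ((1−ρ)/δ)Γ(1/δ+n−i+1))`,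
where `I` denotes the paper's node index `i`. -/
noncomputable def gFun (ρ δ : ℝ) (n I : ℕ) (x : ℝ) : ℝ :=
  Real.Gamma (1 / δ) * Real.Gamma (ρ / δ + x) *
      Real.Gamma ((1 - ρ) / δ + n - I + 1 - x) /
    (Real.Gamma (ρ / δ) * Real.Gamma ((1 - ρ) / δ) * Real.Gamma (1 / δ + n - I + 1))


/-- The Pólya weight of a tuple with `a` ones and `b` zeros. -/
noncomputable def polyaW (R B Δ : ℝ) (a b : ℕ) : ℝ :=
  (∏ i ∈ Finset.range a, (R + i * Δ)) * (∏ j ∈ Finset.range b, (B + j * Δ)) /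
    ∏ m ∈ Finset.range (a + b), (R + B + m * Δ)

theorem polyaW_split (R B Δ : ℝ) (hR : 0 < R) (hB : 0 < B) (hΔ : 0 < Δ) (a b : ℕ) :
    polyaW R B Δ a (b + 1) + polyaW R B Δ (a + 1) b = polyaW R B Δ a b := by
  unfold polyaW
  have e1 : a + (b + 1) = (a + b) + 1 := by ring
  have e2 : (a + 1) + b = (a + b) + 1 := by ring
  rw [e1, e2]
  simp only [Finset.prod_range_succ]
  have h1 : (∏ m ∈ Finset.range (a + b), (R + B + m * Δ)) ≠ 0 :=
    Finset.prod_ne_zero_iff.mpr (fun m _ => by positivity)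
  have h2 : R + B + ((a + b : ℕ) : ℝ) * Δ ≠ 0 := by positivity
  generalize (∏ m ∈ Finset.range (a + b), (R + B + m * Δ)) = P at *
  generalize (∏ m ∈ Finset.range a, (R + m * Δ)) = Q at *
  generalize (∏ m ∈ Finset.range b, (B + m * Δ)) = S at *
  field_simp
  push_cast
  ring

theorem sum_fin2_le (n : ℕ) (z : Fin n → Fin 2) : ∑ t, (z t : ℕ) ≤ n := by
  calc ∑ t, (z t : ℕ) ≤ ∑ t : Fin n, 1 := Finset.sum_le_sum (fun t _ => by omega)
    _ = n := by simp

theorem polyaP_eq_W (n : ℕ) (R B Δ : ℝ) (z : Fin n → Fin 2) :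
    polyaP n R B Δ z = polyaW R B Δ (∑ t, (z t : ℕ)) (n - ∑ t, (z t : ℕ)) := by
  unfold polyaP polyaW
  rw [Nat.add_sub_cancel' (sum_fin2_le n z)]

theorem sum_cons_fin2 (n : ℕ) (f : (Fin (n + 1) → Fin 2) → ℝ) :
    ∑ z, f z = ∑ y : Fin n → Fin 2,
      (f (Fin.cons (α := fun _ => Fin 2) 0 y) + f (Fin.cons (α := fun _ => Fin 2) 1 y)) := by
  rw [← (Fin.consEquiv (fun _ : Fin (n + 1) => Fin 2)).sum_comp, Fintype.sum_prod_type,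
    Fin.sum_univ_two, ← Finset.sum_add_distrib]
  rfl

theorem count_fin2 (n k : ℕ) :
    ∑ z : Fin n → Fin 2, (if ∑ t, (z t : ℕ) = k then (1 : ℝ) else 0) = (n.choose k : ℝ) := by
  induction n generalizing k with
  | zero => cases k <;> simp
  | succ n ih =>
    rw [sum_cons_fin2, Finset.sum_add_distrib]
    simp only [Fin.sum_univ_succ, Fin.cons_zero, Fin.cons_succ, Fin.val_zero, Fin.val_one,
      zero_add]
    rw [ih]
    cases k with
    | zero => simp
    | succ k =>
      have : ∀ z : Fin n → Fin 2, (1 + ∑ t, (z t : ℕ) = k + 1) ↔ (∑ t, (z t : ℕ) = k) := by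
        intro z; omega
      simp only [this]
      rw [ih, Nat.choose_succ_succ]
      push_cast
      ring

theorem count_mul_fin2 (n k : ℕ) (f : ℕ → ℝ) :
    ∑ z : Fin n → Fin 2, (if ∑ t, (z t : ℕ) = k then f (∑ t, (z t : ℕ)) else 0) =
      (n.choose k : ℝ) * f k := by
  rw [← count_fin2, Finset.sum_mul]
  refine Finset.sum_congr rfl (fun z _ => ?_)
  split_ifs with h
  · rw [h, one_mul]
  · simp

theorem polyaP_cons_zero (n : ℕ) (R B Δ : ℝ) (y : Fin n → Fin 2) :
    polyaP (n + 1) R B Δ (Fin.cons (α := fun _ => Fin 2) 0 y) =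
      polyaW R B Δ (∑ t, (y t : ℕ)) (n - (∑ t, (y t : ℕ)) + 1) := by
  rw [polyaP_eq_W]
  simp only [Fin.sum_univ_succ, Fin.cons_zero, Fin.cons_succ, Fin.val_zero, zero_add]
  rw [Nat.sub_add_comm (sum_fin2_le n y)]

theorem polyaP_cons_one (n : ℕ) (R B Δ : ℝ) (y : Fin n → Fin 2) :
    polyaP (n + 1) R B Δ (Fin.cons (α := fun _ => Fin 2) 1 y) =
      polyaW R B Δ ((∑ t, (y t : ℕ)) + 1) (n - (∑ t, (y t : ℕ))) := by
  rw [polyaP_eq_W]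
  simp only [Fin.sum_univ_succ, Fin.cons_zero, Fin.cons_succ, Fin.val_one]
  rw [add_comm 1, Nat.add_sub_add_right]

theorem main_comb (R B Δ : ℝ) (hR : 0 < R) (hB : 0 < B) (hΔ : 0 < Δ) (n : ℕ) (i : Fin n)
    (c k : ℕ) :
    ∑ z : Fin n → Fin 2,
      (if c * (z i : ℕ) + ∑ j, (if i < j then (z j : ℕ) else 0) = k
        then polyaP n R B Δ z else 0) =
      ((n - (i + 1)).choose k : ℝ) * polyaW R B Δ k (n - (i + 1) - k + 1) +
      (if c ≤ k then ((n - (i + 1)).choose (k - c) : ℝ) *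
        polyaW R B Δ (k - c + 1) (n - (i + 1) - (k - c)) else 0) := by
  induction n with
  | zero => exact i.elim0
  | succ n ih =>
    rw [sum_cons_fin2]
    induction i using Fin.cases with
    | zero =>
      rw [Finset.sum_add_distrib]
      simp only [polyaP_cons_zero, polyaP_cons_one]
      simp only [Fin.sum_univ_succ, Fin.cons_zero, Fin.cons_succ, Fin.val_zero, Fin.val_one,
        zero_add, mul_zero, mul_one, lt_irrefl, if_false, Fin.succ_pos, if_true,
        Nat.add_sub_cancel]
      congr 1
      · exact count_mul_fin2 n k (fun s => polyaW R B Δ s (n - s + 1))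
      · split_ifs with h
        · rw [← count_mul_fin2 n (k - c) (fun s => polyaW R B Δ (s + 1) (n - s))]
          refine Finset.sum_congr rfl (fun z _ => ?_)
          have : (c + ∑ t, (z t : ℕ) = k) ↔ (∑ t, (z t : ℕ) = k - c) := by omega
          simp only [this]
        · refine Finset.sum_eq_zero (fun z _ => ?_)
          rw [if_neg (by omega)]
    | succ i =>
      simp only [polyaP_cons_zero, polyaP_cons_one]
      simp only [Fin.sum_univ_succ, Fin.cons_succ, Fin.not_lt_zero, if_false, zero_add,
        Fin.succ_lt_succ_iff, Fin.val_succ, Nat.add_sub_add_right]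
      rw [← ih i]
      refine Finset.sum_congr rfl (fun y _ => ?_)
      split_ifs with h
      · rw [polyaW_split R B Δ hR hB hΔ, polyaP_eq_W]
      · simp

theorem prod_gamma (A Δ : ℝ) (hA : 0 < A) (hΔ : 0 < Δ) (a : ℕ) :
    ∏ i ∈ Finset.range a, (A + i * Δ) =
      Δ ^ a * Real.Gamma (A / Δ + a) / Real.Gamma (A / Δ) := by
  have h0 : Real.Gamma (A / Δ) ≠ 0 := (Real.Gamma_pos_of_pos (by positivity)).ne'
  induction a with
  | zero => simp [h0]
  | succ a ih =>
    rw [Finset.prod_range_succ, ih]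
    push_cast
    rw [← add_assoc, Real.Gamma_add_one (by positivity)]
    field_simp
    ring

theorem gFun_eq_W (R B Δ : ℝ) (hR : 0 < R) (hB : 0 < B) (hΔ : 0 < Δ) (ρ δ : ℝ)
    (hρ : ρ = R / (R + B)) (hδ : δ = Δ / (R + B)) (n I a b : ℕ) (x : ℝ)
    (hx : x = a) (hab : n + 1 = I + a + b) :
    gFun ρ δ n I x = polyaW R B Δ a b := by
  have e1 : ρ / δ = R / Δ := by rw [hρ, hδ]; field_simp
  have e2 : (1 - ρ) / δ = B / Δ := by rw [hρ, hδ]; field_simp; ring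
  have e3 : 1 / δ = (R + B) / Δ := by rw [hδ]; field_simp
  have hab' : (n : ℝ) + 1 = I + a + b := by exact_mod_cast hab
  have e4 : B / Δ + n - I + 1 - x = B / Δ + b := by rw [hx]; linarith
  have e5 : (R + B) / Δ + n - I + 1 = (R + B) / Δ + (a + b : ℕ) := by push_cast; linarith
  unfold gFun polyaW
  rw [e1, e2, e3, e4, e5, hx, prod_gamma R Δ hR hΔ, prod_gamma B Δ hB hΔ,
    prod_gamma (R + B) Δ (by positivity) hΔ]
  have h1 := (Real.Gamma_pos_of_pos (show 0 < R / Δ by positivity)).ne'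
  have h2 := (Real.Gamma_pos_of_pos (show 0 < B / Δ by positivity)).ne'
  have h3 := (Real.Gamma_pos_of_pos (show 0 < (R + B) / Δ by positivity)).ne'
  have h4 := (Real.Gamma_pos_of_pos (show 0 < (R + B) / Δ + (a + b : ℕ) by positivity)).ne'
  generalize Real.Gamma (R / Δ) = g1 at *
  generalize Real.Gamma (B / Δ) = g2 at *
  generalize Real.Gamma ((R + B) / Δ) = g3 at *
  generalize Real.Gamma ((R + B) / Δ + (a + b : ℕ)) = g4 at *
  generalize Real.Gamma (R / Δ + a) = g5 at *
  generalize Real.Gamma (B / Δ + b) = g6 at *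
  rw [pow_add]
  field_simp

/-- The exact degree distribution of node `V_i` under the Pólya joint law:
`P(deg_i = k) = C(n−i,k)·g(k)·1{k ≤ n−i} + C(n−i,k−i)·g(k−i+1)·1{k ≥ i}`. -/
theorem polyaP_degree_distribution (n : ℕ) (hn : 1 ≤ n) (R B Δ : ℝ)
    (hR : 0 < R) (hB : 0 < B) (hΔ : 0 < Δ) (ρ δ : ℝ)
    (hρ : ρ = R / (R + B)) (hδ : δ = Δ / (R + B)) (i : Fin n) (k : ℕ) (hk : k ≤ n) :
    ∑ z ∈ Finset.univ.filter (fun z : Fin n → Fin 2 => degNode n i z = k),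
        polyaP n R B Δ z =
      (if k ≤ n - ((i : ℕ) + 1) then
          ((n - ((i : ℕ) + 1)).choose k : ℝ) * gFun ρ δ n ((i : ℕ) + 1) k
        else 0) +
      (if (i : ℕ) + 1 ≤ k then
          ((n - ((i : ℕ) + 1)).choose (k - ((i : ℕ) + 1)) : ℝ) *
            gFun ρ δ n ((i : ℕ) + 1) ((k : ℝ) - ((i : ℕ) + 1) + 1)
        else 0) := by
  have hi := i.isLt
  rw [Finset.sum_filter]
  have hm := main_comb R B Δ hR hB hΔ n i ((i : ℕ) + 1) k
  simp only [degNode, Finset.sum_filter]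
  rw [hm]
  congr 1
  · split_ifs with h
    · rw [gFun_eq_W R B Δ hR hB hΔ ρ δ hρ hδ n ((i : ℕ) + 1) k
        (n - ((i : ℕ) + 1) - k + 1) k rfl (by omega)]
    · rw [Nat.choose_eq_zero_of_lt (by omega)]
      simp
  · split_ifs with h
    · rw [gFun_eq_W R B Δ hR hB hΔ ρ δ hρ hδ n ((i : ℕ) + 1) (k - ((i : ℕ) + 1) + 1)
        (n - ((i : ℕ) + 1) - (k - ((i : ℕ) + 1))) _ (by push_cast [Nat.cast_sub h]; ring)
        (by omega)]
    · rfl
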